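/- arXiv:2207.08717 — 2 statements merged into one kernel-verified Lean document; each statement's English description precedes it below -/
import Mathlib

section
/- Let X = ℓ_∞ ⊕₁ ℓ₁ (the ℓ¹-sum). Let Z = span{(e₁,0)} where e₁ ∈ ℓ_∞ is the first unit vector. Suppose φ : ℓ_∞ⁿ → X is linear with ‖φ‖ ≤ 1 and ‖(e₁,0) + φ(y)‖ > (1−ε)(1 + ‖y‖) for all y ∈ ℓ_∞ⁿ, where 0 < ε < 1/2. Then, with Q : X → ℓ₁ the canonical projection, for every x ∈ ℓ_∞ⁿ one has (1−2ε)‖x‖ ≤ ‖Q(φ(x))‖ ≤ ‖x‖. -/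
open scoped ENNReal

local notation "ℓinf" => lp (fun _ : ℕ => ℝ) ⊤
local notation "ℓ1" => lp (fun _ : ℕ => ℝ) 1

lemma stmt5_aux (e₁ a : ℓinf) (he₁ : ∀ k : ℕ, e₁ k = if k = 0 then 1 else 0)
    (ha : ‖a‖ ≤ 1) (h0 : a 0 ≤ 0) : ‖e₁ + a‖ ≤ 1 := by
  refine lp.norm_le_of_forall_le zero_le_one fun k => ?_
  have hk : |a k| ≤ 1 := (lp.norm_apply_le_norm ENNReal.top_ne_zero a k).trans ha
  rw [lp.coeFn_add, Pi.add_apply, he₁, Real.norm_eq_abs]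
  rw [abs_le] at hk ⊢
  split_ifs with h
  · subst h
    constructor <;> linarith
  · constructor <;> linarith

/-- In `X = ℓ_∞ ⊕₁ ℓ₁`, if `φ : ℓ_∞ⁿ → X` has `‖φ‖ ≤ 1` and
`‖(e₁,0) + φ y‖ > (1-ε)(1+‖y‖)` for all `y`, then the `ℓ₁`-component of `φ`
is bounded below: `(1-2ε)‖x‖ ≤ ‖Q(φ x)‖ ≤ ‖x‖`. -/
theorem stmt5 (n : ℕ) (ε : ℝ) (hε0 : 0 < ε) (hε : ε < 1 / 2)
    (e₁ : ℓinf) (he₁ : ∀ k : ℕ, e₁ k = if k = 0 then 1 else 0)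
    (φ : PiLp ⊤ (fun _ : Fin n => ℝ) →L[ℝ] WithLp 1 (ℓinf × ℓ1)) (hφ : ‖φ‖ ≤ 1)
    (h : ∀ y : PiLp ⊤ (fun _ : Fin n => ℝ),
      (1 - ε) * (1 + ‖y‖) < ‖(WithLp.equiv 1 (ℓinf × ℓ1)).symm (e₁, 0) + φ y‖) :
    ∀ x : PiLp ⊤ (fun _ : Fin n => ℝ),
      (1 - 2 * ε) * ‖x‖ ≤ ‖((WithLp.equiv 1 (ℓinf × ℓ1)) (φ x)).2‖ ∧
      ‖((WithLp.equiv 1 (ℓinf × ℓ1)) (φ x)).2‖ ≤ ‖x‖ := by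
  have hle : ∀ x, ‖(φ x).fst‖ + ‖(φ x).snd‖ ≤ ‖x‖ := by
    intro x
    have h1 : ‖φ x‖ ≤ ‖x‖ := by
      simpa using φ.le_of_opNorm_le hφ x
    rwa [WithLp.prod_norm_eq_of_L1] at h1
  have h2 : ∀ y, (1 - ε) * (1 + ‖y‖) < ‖e₁ + (φ y).fst‖ + ‖(φ y).snd‖ := by
    intro y
    have h1 := h y
    rw [WithLp.prod_norm_eq_of_L1] at h1
    simpa using h1
  have key : ∀ y : PiLp ⊤ (fun _ : Fin n => ℝ), ‖y‖ = 1 → 1 - 2 * ε ≤ ‖(φ y).snd‖ := by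
    intro y hy
    have h3 := hle y
    have hb := norm_nonneg (φ y).snd
    rcases le_total ((φ y).fst 0) 0 with h0 | h0
    · have := stmt5_aux e₁ (φ y).fst he₁ (by linarith) h0
      have := h2 y
      rw [hy] at this
      linarith
    · have := stmt5_aux e₁ (-(φ y).fst) he₁ (by rw [norm_neg]; linarith)
        (by rw [lp.coeFn_neg, Pi.neg_apply]; linarith)
      have h4 := h2 (-y)
      rw [map_neg, WithLp.neg_fst, WithLp.neg_snd, norm_neg, norm_neg, hy] at h4
      linarith
  intro x
  have h3 := hle x
  change (1 - 2 * ε) * ‖x‖ ≤ ‖(φ x).snd‖ ∧ ‖(φ x).snd‖ ≤ ‖x‖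
  refine ⟨?_, by linarith [norm_nonneg (φ x).fst]⟩
  by_cases hx : ‖x‖ = 0
  · rw [hx]; simp
  · have hp : 0 < ‖x‖ := lt_of_le_of_ne (norm_nonneg x) (Ne.symm hx)
    have h5 := key (‖x‖⁻¹ • x) (by rw [norm_smul, norm_inv, norm_norm, inv_mul_cancel₀ hx])
    rw [map_smul, WithLp.smul_snd, norm_smul, norm_inv, norm_norm] at h5
    rwa [← le_div_iff₀ hp, div_eq_inv_mul]
end

section
/- Let X be a Banach space and U a free ultrafilter on ℕ. Suppose for every n ∈ ℕ there is T_n : ℓ_∞ⁿ → X with ‖T_n‖ ≤ 1 and ‖z_n + T_n(x)‖ ≥ (1 − 1/n)(1 + ‖x‖) for all x ∈ ℓ_∞ⁿ, where (z_n) is a bounded sequence of unit vectors in X. Then the operator T : (ℓ_∞ⁿ)_U → X_U defined by T((x_n)_U) = (T_n(x_n))_U is well-defined, has ‖T‖ ≤ 1, is an isometry, and satisfies ‖(z_n)_U + T((x_n)_U)‖ = 1 + ‖(x_n)_U‖ for every (x_n)_U. -/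
open scoped ENNReal
open Filter

/-- The subspace `c_{0,U}(ℕ, Xₙ)` of `ℓ_∞(ℕ, Xₙ)`. -/
noncomputable def c0U (X : ℕ → Type*) [∀ n, NormedAddCommGroup (X n)]
    [∀ n, NormedSpace ℝ (X n)] (U : Ultrafilter ℕ) : Submodule ℝ (lp X ⊤) where
  carrier := {f | Tendsto (fun n => ‖f n‖) (U : Filter ℕ) (nhds 0)}
  zero_mem' := by
    simpa using (tendsto_const_nhds : Tendsto (fun _ : ℕ => (0 : ℝ)) (U : Filter ℕ) (nhds 0))
  add_mem' := by
    intro f g hf hg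
    refine squeeze_zero (fun n => norm_nonneg _) (g := fun n => ‖f n‖ + ‖g n‖)
      (fun n => by simpa [lp.coeFn_add] using norm_add_le (f n) (g n)) ?_
    simpa using hf.add hg
  smul_mem' := by
    intro c f hf
    have : Tendsto (fun n => ‖c‖ * ‖f n‖) (U : Filter ℕ) (nhds (‖c‖ * 0)) := hf.const_mul _
    simpa [lp.coeFn_smul, norm_smul] using this

theorem c0U_tendsto_norm (X : ℕ → Type*) [∀ n, NormedAddCommGroup (X n)]
    [∀ n, NormedSpace ℝ (X n)] (U : Ultrafilter ℕ) (f : lp X ⊤) :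
    Tendsto (fun n => ‖f n‖) (U : Filter ℕ)
      (nhds ‖(Submodule.Quotient.mk f : lp X ⊤ ⧸ c0U X U)‖) := by
  have hb : ∀ (m : lp X ⊤) n, ‖m n‖ ≤ ‖m‖ := fun m n =>
    lp.norm_apply_le_norm ENNReal.top_ne_zero m n
  obtain ⟨L, hL, hlim⟩ := (isCompact_Icc (a := (0 : ℝ)) (b := ‖f‖)).ultrafilter_le_nhds
    (U.map (fun n => ‖f n‖)) (by
      rw [le_principal_iff]
      exact Filter.Eventually.of_forall (f := (U : Filter ℕ))
        (p := fun n => ‖f n‖ ∈ Set.Icc 0 ‖f‖) (fun n => ⟨norm_nonneg _, hb f n⟩))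
  have hlim' : Tendsto (fun n => ‖f n‖) (U : Filter ℕ) (nhds L) := hlim
  suffices h : ‖(Submodule.Quotient.mk f : lp X ⊤ ⧸ c0U X U)‖ = L by rw [h]; exact hlim'
  apply le_antisymm
  · apply le_of_forall_pos_le_add
    intro ε hε
    have hA : ∀ᶠ n in (U : Filter ℕ), ‖f n‖ < L + ε :=
      hlim'.eventually (gt_mem_nhds (by linarith))
    classical
    have hg0 : ∀ n, ‖(if ‖f n‖ < L + ε then f n else 0 : X n)‖ ≤ L + ε := by
      intro n
      split_ifs with h
      · exact h.le
      · simpa using add_nonneg hL.1 hε.le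
    let g : lp X ⊤ := ⟨fun n => if ‖f n‖ < L + ε then f n else 0, memℓp_infty ⟨L + ε, by
      rintro _ ⟨n, rfl⟩
      exact hg0 n⟩⟩
    have hg : ‖g‖ ≤ L + ε := lp.norm_le_of_forall_le (add_nonneg hL.1 hε.le) hg0
    have hfg : (Submodule.Quotient.mk f : lp X ⊤ ⧸ c0U X U) = Submodule.Quotient.mk g := by
      rw [Submodule.Quotient.eq]
      change Tendsto (fun n => ‖(f - g) n‖) (U : Filter ℕ) (nhds 0)
      refine tendsto_const_nhds.congr' ?_
      filter_upwards [hA] with n hn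
      have : g n = f n := if_pos hn
      simp [this]
    rw [hfg]
    exact (Submodule.Quotient.norm_mk_le _ g).trans hg
  · apply le_of_forall_pos_le_add
    intro ε hε
    obtain ⟨m, hm, hlt⟩ := Submodule.Quotient.norm_mk_lt
      (Submodule.Quotient.mk f : lp X ⊤ ⧸ c0U X U) hε
    refine le_trans ?_ hlt.le
    have hd : Tendsto (fun n => ‖(f - m) n‖) (U : Filter ℕ) (nhds 0) :=
      (Submodule.Quotient.eq (c0U X U)).1 hm.symm
    have h2 : Tendsto (fun n => ‖f n‖ - ‖(f - m) n‖) (U : Filter ℕ) (nhds (L - 0)) :=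
      hlim'.sub hd
    rw [sub_zero] at h2
    refine le_of_tendsto h2 (Eventually.of_forall fun n => ?_)
    have h3 := norm_sub_norm_le (f n) (f n - m n)
    have h4 := hb m n
    simp only [lp.coeFn_sub, Pi.sub_apply]
    simp only [sub_sub_cancel] at h3
    linarith

/-- Given operators `Tₙ : ℓ_∞ⁿ → X` with `‖Tₙ‖ ≤ 1` and `‖zₙ + Tₙ x‖ ≥ (1-1/n)(1+‖x‖)`
for unit vectors `zₙ ∈ X`, the induced operator `T : (ℓ_∞ⁿ)_U → X_U`,
`T (xₙ)_U = (Tₙ xₙ)_U`, is well defined, has norm at most one, is an isometry, and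
satisfies `‖(zₙ)_U + T (xₙ)_U‖ = 1 + ‖(xₙ)_U‖`. -/
theorem stmt11 {X : Type*} [NormedAddCommGroup X] [NormedSpace ℝ X] [CompleteSpace X]
    (U : Ultrafilter ℕ) (hU : (U : Filter ℕ) ≤ Filter.cofinite)
    (z : ℕ → X) (hz : ∀ n, ‖z n‖ = 1)
    (T : ∀ n : ℕ, PiLp ⊤ (fun _ : Fin n => ℝ) →L[ℝ] X)
    (hT : ∀ n, ‖T n‖ ≤ 1)
    (hTz : ∀ n, ∀ x : PiLp ⊤ (fun _ : Fin n => ℝ),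
      (1 - 1 / (n : ℝ)) * (1 + ‖x‖) ≤ ‖z n + T n x‖)
    (zseq : lp (fun _ : ℕ => X) ⊤)
    (hzseq : ∀ n, (zseq : ∀ _ : ℕ, X) n = z n) :
    ∃ Top : (lp (fun n : ℕ => PiLp ⊤ (fun _ : Fin n => ℝ)) ⊤ ⧸
          c0U (fun n : ℕ => PiLp ⊤ (fun _ : Fin n => ℝ)) U) →L[ℝ]
        (lp (fun _ : ℕ => X) ⊤ ⧸ c0U (fun _ : ℕ => X) U),
      (∀ (f : lp (fun n : ℕ => PiLp ⊤ (fun _ : Fin n => ℝ)) ⊤) (g : lp (fun _ : ℕ => X) ⊤),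
        (∀ n, (g : ∀ _ : ℕ, X) n = T n (f n)) →
          Top (Submodule.Quotient.mk f) = Submodule.Quotient.mk g) ∧
      ‖Top‖ ≤ 1 ∧
      (∀ v, ‖Top v‖ = ‖v‖) ∧
      (∀ v, ‖(Submodule.Quotient.mk zseq : lp (fun _ : ℕ => X) ⊤ ⧸ c0U (fun _ : ℕ => X) U) +
        Top v‖ = 1 + ‖v‖) := by
  have hTle : ∀ n (x : PiLp ⊤ (fun _ : Fin n => ℝ)), ‖T n x‖ ≤ ‖x‖ := fun n x => by
    simpa using (T n).le_of_opNorm_le (hT n) x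
  let S : lp (fun n : ℕ => PiLp ⊤ (fun _ : Fin n => ℝ)) ⊤ →ₗ[ℝ] lp (fun _ : ℕ => X) ⊤ :=
    { toFun := fun f => ⟨fun n => T n (f n), memℓp_infty ⟨‖f‖, by
        rintro _ ⟨n, rfl⟩
        exact (hTle n _).trans (lp.norm_apply_le_norm ENNReal.top_ne_zero f n)⟩⟩
      map_add' := fun f g => by
        apply lp.ext
        funext n
        exact (T n).map_add (f n) (g n)
      map_smul' := fun c f => by
        apply lp.ext
        funext n
        exact (T n).map_smul c (f n) }
  have hS : ∀ f n, (S f : ∀ _ : ℕ, X) n = T n (f n) := fun f n => rfl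
  have hle : c0U (fun n : ℕ => PiLp ⊤ (fun _ : Fin n => ℝ)) U ≤
      (c0U (fun _ : ℕ => X) U).comap S := by
    intro f hf
    have hf' : Tendsto (fun n => ‖f n‖) (U : Filter ℕ) (nhds 0) := hf
    exact squeeze_zero (fun n => norm_nonneg _) (fun n => hTle n (f n)) hf'
  let Q := Submodule.mapQ _ _ S hle
  have hQ : ∀ f, Q (Submodule.Quotient.mk f) = Submodule.Quotient.mk (S f) := fun f => rfl
  have hQle : ∀ v, ‖Q v‖ ≤ 1 * ‖v‖ := by
    intro v
    obtain ⟨f, rfl⟩ := Submodule.Quotient.mk_surjective _ v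
    rw [hQ, one_mul]
    exact le_of_tendsto_of_tendsto' (c0U_tendsto_norm _ U (S f)) (c0U_tendsto_norm _ U f)
      (fun n => hTle n (f n))
  have hz1 : ‖(Submodule.Quotient.mk zseq : lp (fun _ : ℕ => X) ⊤ ⧸ c0U (fun _ : ℕ => X) U)‖
      = 1 := by
    refine tendsto_nhds_unique (c0U_tendsto_norm _ U zseq) ?_
    simp only [hzseq, hz]
    exact tendsto_const_nhds
  have hge : ∀ v, 1 + ‖v‖ ≤ ‖(Submodule.Quotient.mk zseq :
      lp (fun _ : ℕ => X) ⊤ ⧸ c0U (fun _ : ℕ => X) U) + Q v‖ := by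
    intro v
    obtain ⟨f, rfl⟩ := Submodule.Quotient.mk_surjective _ v
    rw [hQ, ← Submodule.Quotient.mk_add]
    have h1 : Tendsto (fun n : ℕ => 1 - 1 / (n : ℝ)) (U : Filter ℕ) (nhds (1 - 0)) :=
      (tendsto_const_nhds.sub tendsto_one_div_atTop_nhds_zero_nat).mono_left
        (by rwa [← Nat.cofinite_eq_atTop])
    have h2 := h1.mul ((c0U_tendsto_norm _ U f).const_add 1)
    rw [sub_zero, one_mul] at h2
    refine le_of_tendsto_of_tendsto' h2 (c0U_tendsto_norm _ U (zseq + S f)) (fun n => ?_)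
    rw [lp.coeFn_add, Pi.add_apply, hzseq, hS]
    exact hTz n (f n)
  refine ⟨Q.mkContinuous 1 hQle, ?_, Q.mkContinuous_norm_le zero_le_one hQle, ?_, ?_⟩
  · intro f g hfg
    have : g = S f := by
      apply lp.ext
      funext n
      exact hfg n
    rw [this]
    rfl
  · intro v
    change ‖Q v‖ = ‖v‖
    have h1 := hge v
    have h2 := norm_add_le (Submodule.Quotient.mk zseq :
      lp (fun _ : ℕ => X) ⊤ ⧸ c0U (fun _ : ℕ => X) U) (Q v)
    have h3 := hQle v
    linarith
  · intro v
    change ‖_ + Q v‖ = 1 + ‖v‖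
    have h1 := hge v
    have h2 := norm_add_le (Submodule.Quotient.mk zseq :
      lp (fun _ : ℕ => X) ⊤ ⧸ c0U (fun _ : ℕ => X) U) (Q v)
    have h3 := hQle v
    linarith
end
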